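/- (Full source power is optimal for the ideal low-pass relay) Let a > 0, b > 0, σ² > 0, P_s > 0, P_r > 0, δ ≥ 0 and 0 < ω_c < π. Suppose S : [0, π] → ℝ is integrable with S(ω) ≥ 0, satisfies the source power constraint (1/π) ∫_0^π S(ω) dω < P_s (strictly) and the relay power constraint (1/π) ∫_0^{ω_c} δ²·(a²·S(ω) + σ²) dω ≤ P_r. Then there exists an integrable S' : [0, π] → ℝ with S'(ω) ≥ 0 that satisfies both power constraints (with (1/π) ∫_0^π S'(ω) dω ≤ P_s) and yields a strictly larger objective value (1/π) ∫_0^{ω_c} (1/2)·log₂(1 + ((1 + a·b·δ)²/((b²δ² + 1)σ²))·S'(ω)) dω + (1/π) ∫_{ω_c}^{π} (1/2)·log₂(1 + S'(ω)/σ²) dω than the same expression evaluated at S. -/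

import Mathlib

open Real MeasureTheory Set intervalIntegral

lemma aux_int (σ2 u v : ℝ) (hσ2 : 0 < σ2) (T : ℝ → ℝ) (hT : ∀ ω, 0 ≤ T ω)
    (h : IntervalIntegrable T volume u v) :
    IntervalIntegrable (fun ω => (1 / 2) * Real.logb 2 (1 + T ω / σ2)) volume u v := by
  have hg : IntervalIntegrable (fun ω => (T ω / σ2)) volume u v := h.div_const σ2
  have hl : IntervalIntegrable (fun ω => Real.log (1 + T ω / σ2)) volume u v := by
    refine hg.mono_fun ?_ ?_
    · have h1 : AEMeasurable T (volume.restrict (uIoc u v)) := (intervalIntegrable_iff.1 h).aestronglyMeasurable.aemeasurable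
      exact (Real.measurable_log.comp_aemeasurable
        ((h1.div_const σ2).const_add 1)).aestronglyMeasurable
    · refine Filter.Eventually.of_forall fun ω => ?_
      have h0 : 0 ≤ T ω / σ2 := div_nonneg (hT ω) hσ2.le
      simp only [Real.norm_eq_abs]
      rw [abs_of_nonneg (Real.log_nonneg (by linarith)), abs_of_nonneg h0]
      have := Real.log_le_sub_one_of_pos (show 0 < 1 + T ω / σ2 by linarith)
      linarith
  exact (hl.div_const (Real.log 2)).const_mul (1 / 2)

/-- Full source power is optimal for the ideal low-pass relay: if the source power
constraint is strictly slack, then the input PSD can be modified to satisfy both power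
constraints and yield a strictly larger objective value. -/
theorem full_source_power_optimal
    (a b σ2 Ps Pr δ ωc : ℝ) (ha : 0 < a) (hb : 0 < b) (hσ2 : 0 < σ2)
    (hPs : 0 < Ps) (hPr : 0 < Pr) (hδ : 0 ≤ δ) (hωc0 : 0 < ωc) (hωcπ : ωc < π)
    (S : ℝ → ℝ) (hS : IntegrableOn S (Icc 0 π)) (hSnn : ∀ ω, 0 ≤ S ω)
    (hsrc : (1 / π) * (∫ ω in (0:ℝ)..π, S ω) < Ps)
    (hrel : (1 / π) * (∫ ω in (0:ℝ)..ωc, δ ^ 2 * (a ^ 2 * S ω + σ2)) ≤ Pr) :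
    ∃ S' : ℝ → ℝ, IntegrableOn S' (Icc 0 π) ∧ (∀ ω, 0 ≤ S' ω) ∧
      (1 / π) * (∫ ω in (0:ℝ)..π, S' ω) ≤ Ps ∧
      (1 / π) * (∫ ω in (0:ℝ)..ωc, δ ^ 2 * (a ^ 2 * S' ω + σ2)) ≤ Pr ∧
      (1 / π) * (∫ ω in (0:ℝ)..ωc,
            (1 / 2) * Real.logb 2 (1 + ((1 + a * b * δ) ^ 2 / ((b ^ 2 * δ ^ 2 + 1) * σ2)) * S ω))
        + (1 / π) * (∫ ω in ωc..π, (1 / 2) * Real.logb 2 (1 + S ω / σ2))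
      < (1 / π) * (∫ ω in (0:ℝ)..ωc,
            (1 / 2) * Real.logb 2 (1 + ((1 + a * b * δ) ^ 2 / ((b ^ 2 * δ ^ 2 + 1) * σ2)) * S' ω))
        + (1 / π) * (∫ ω in ωc..π, (1 / 2) * Real.logb 2 (1 + S' ω / σ2)) := by
  set c : ℝ := Ps - (1 / π) * (∫ ω in (0:ℝ)..π, S ω) with hc
  have hc0 : 0 < c := by linarith
  have hpi := Real.pi_pos
  set S' : ℝ → ℝ := fun ω => S ω + (Ioi ωc).indicator (fun _ => c) ω with hS'
  have hind : ∀ ω, 0 ≤ (Ioi ωc).indicator (fun _ => c) ω := fun ω =>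
    indicator_nonneg (fun _ _ => hc0.le) ω
  have hindle : ∀ ω, (Ioi ωc).indicator (fun _ => c) ω ≤ c := fun ω =>
    indicator_le_self' (fun _ _ => hc0.le) ω
  have hcI : IntegrableOn (fun ω => (Ioi ωc).indicator (fun _ => c) ω) (Icc 0 π) :=
    (integrable_const c).indicator measurableSet_Ioi
  have hS'I : IntegrableOn S' (Icc 0 π) := hS.add hcI
  have hS'nn : ∀ ω, 0 ≤ S' ω := fun ω => add_nonneg (hSnn ω) (hind ω)
  have hii : ∀ T : ℝ → ℝ, IntegrableOn T (Icc 0 π) → IntervalIntegrable T volume 0 π :=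
    fun T hT => (intervalIntegrable_iff_integrableOn_Icc_of_le hpi.le).2 hT
  have hii' : ∀ T : ℝ → ℝ, IntegrableOn T (Icc 0 π) → IntervalIntegrable T volume ωc π :=
    fun T hT => (intervalIntegrable_iff_integrableOn_Icc_of_le hωcπ.le).2
      (hT.mono_set (Icc_subset_Icc_left hωc0.le))
  have heq : ∀ ω ∈ uIcc 0 ωc, S' ω = S ω := by
    intro ω hω
    rw [uIcc_of_le hωc0.le] at hω
    have : ω ∉ Ioi ωc := not_lt.2 hω.2
    simp [hS', indicator_of_notMem this]
  refine ⟨S', hS'I, hS'nn, ?_, ?_, ?_⟩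
  · have h1 : (∫ ω in (0:ℝ)..π, S' ω) = (∫ ω in (0:ℝ)..π, S ω)
        + ∫ ω in (0:ℝ)..π, (Ioi ωc).indicator (fun _ => c) ω :=
      intervalIntegral.integral_add (hii _ hS) (hii _ hcI)
    have h2 : (∫ ω in (0:ℝ)..π, (Ioi ωc).indicator (fun _ => c) ω) ≤ ∫ ω in (0:ℝ)..π, c :=
      intervalIntegral.integral_mono hpi.le (hii _ hcI) intervalIntegrable_const hindle
    rw [intervalIntegral.integral_const, smul_eq_mul, sub_zero] at h2
    have h3 := mul_le_mul_of_nonneg_left h2 (show 0 ≤ 1 / π by positivity)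
    have h4 : 1 / π * (π * c) = c := by field_simp
    rw [h1, mul_add]
    linarith
  · rw [intervalIntegral.integral_congr (g := fun ω => δ ^ 2 * (a ^ 2 * S ω + σ2))]
    · exact hrel
    · intro ω hω
      simp only [heq ω hω]
  · rw [intervalIntegral.integral_congr (a := 0) (b := ωc)
      (f := fun ω => (1 / 2) * Real.logb 2 (1 + ((1 + a * b * δ) ^ 2 / ((b ^ 2 * δ ^ 2 + 1) * σ2)) * S' ω))
      (g := fun ω => (1 / 2) * Real.logb 2 (1 + ((1 + a * b * δ) ^ 2 / ((b ^ 2 * δ ^ 2 + 1) * σ2)) * S ω))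
      (fun ω hω => by simp only [heq ω hω])]
    have i1 := aux_int σ2 ωc π hσ2 S hSnn (hii' _ hS)
    have i2 := aux_int σ2 ωc π hσ2 S' hS'nn (hii' _ hS'I)
    have hp := intervalIntegral.intervalIntegral_pos_of_pos_on (i2.sub i1) (fun ω hω => by
      have hm : ω ∈ Ioi ωc := hω.1
      have hv : S' ω = S ω + c := by simp only [hS', indicator_of_mem hm]
      have h0 : 0 ≤ S ω / σ2 := div_nonneg (hSnn ω) hσ2.le
      have h1 : S ω / σ2 < S' ω / σ2 := by
        rw [hv]; exact div_lt_div_of_pos_right (by linarith) hσ2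
      have := Real.logb_lt_logb (b := 2) (by norm_num) (show 0 < 1 + S ω / σ2 by linarith)
        (show 1 + S ω / σ2 < 1 + S' ω / σ2 by linarith)
      show 0 < (1 / 2) * Real.logb 2 (1 + S' ω / σ2) - (1 / 2) * Real.logb 2 (1 + S ω / σ2)
      linarith) hωcπ
    rw [intervalIntegral.integral_sub i2 i1] at hp
    have := mul_lt_mul_of_pos_left (sub_pos.1 hp) (show 0 < 1 / π by positivity)
    linarith
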